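/- arXiv:1602.07080 — 4 statements merged into one kernel-verified Lean document; each statement's English description precedes it below -/
import Mathlib

section
/- Let E : ℝ^N × ℝ^P → ℝ be such that ∇ₓE is continuously differentiable near (x₀, θ₀), ∇ₓE(x₀, θ₀) = 0, and H_E(x₀, θ₀) is invertible, so that a continuously differentiable local solution map x*(θ) with x*(θ₀) = x₀ and ∇ₓE(x*(θ), θ) = 0 exists. Let L : ℝ^N × ℝ^P → ℝ be continuously differentiable. Then the reduced objective θ ↦ L(x*(θ), θ) is differentiable at θ₀ and its derivative equals −(∂L/∂x)(x₀, θ₀) · (H_E(x₀, θ₀))⁻¹ · (∂²E/∂θ∂x)(x₀, θ₀) + (∂L/∂θ)(x₀, θ₀). -/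
open Filter Topology

/-- Chain rule along the graph of `xs`, in terms of the partial derivatives of `F`. -/
theorem hasFDerivAt_graph_aux {X T W : Type*} [NormedAddCommGroup X] [NormedSpace ℝ X]
    [NormedAddCommGroup T] [NormedSpace ℝ T] [NormedAddCommGroup W] [NormedSpace ℝ W]
    (F : X × T → W) (xs : T → X) (x₀ : X) (θ₀ : T) (hx : xs θ₀ = x₀)
    (hF : DifferentiableAt ℝ F (x₀, θ₀)) (A : T →L[ℝ] X) (hA : HasFDerivAt xs A θ₀) :
    HasFDerivAt (fun θ => F (xs θ, θ))
      ((fderiv ℝ (fun x => F (x, θ₀)) x₀).comp A + fderiv ℝ (fun t => F (x₀, t)) θ₀) θ₀ := by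
  subst hx
  have hD := hF.hasFDerivAt
  have h1 := hD.comp (xs θ₀) (hasFDerivAt_prodMk_left (𝕜 := ℝ) (xs θ₀) θ₀)
  have h2 := hD.comp θ₀ (hasFDerivAt_prodMk_right (𝕜 := ℝ) (xs θ₀) θ₀)
  have h3 := HasFDerivAt.comp (f := fun θ => (xs θ, θ)) θ₀ hD (hA.prodMk (hasFDerivAt_id θ₀))
  have e1 : fderiv ℝ (fun x => F (x, θ₀)) (xs θ₀) = _ := h1.fderiv
  have e2 : fderiv ℝ (fun t => F (xs θ₀, t)) θ₀ = _ := h2.fderiv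
  rw [e1, e2]
  refine h3.congr_fderiv ?_
  ext v
  simp [← map_add]

/-- Total derivative of the reduced upper level objective `θ ↦ L(x*(θ), θ)` via the
implicit function theorem: `G = ∇ₓE`, `H` the (invertible) Hessian of `E` in `x`. -/
theorem stmt_1 {N P : ℕ}
    (E L : EuclideanSpace ℝ (Fin N) × EuclideanSpace ℝ (Fin P) → ℝ)
    (G : EuclideanSpace ℝ (Fin N) × EuclideanSpace ℝ (Fin P) → EuclideanSpace ℝ (Fin N))
    (x₀ : EuclideanSpace ℝ (Fin N)) (θ₀ : EuclideanSpace ℝ (Fin P))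
    (hGrad : ∀ᶠ p in 𝓝 (x₀, θ₀), HasGradientAt (fun x => E (x, p.2)) (G p) p.1)
    (hC1 : ContDiffAt ℝ 1 G (x₀, θ₀))
    (hcrit : G (x₀, θ₀) = 0)
    (H : EuclideanSpace ℝ (Fin N) ≃L[ℝ] EuclideanSpace ℝ (Fin N))
    (hH : (H : EuclideanSpace ℝ (Fin N) →L[ℝ] EuclideanSpace ℝ (Fin N))
        = fderiv ℝ (fun x => G (x, θ₀)) x₀)
    (xs : EuclideanSpace ℝ (Fin P) → EuclideanSpace ℝ (Fin N))
    (hxs₀ : xs θ₀ = x₀)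
    (hxsC1 : ContDiffAt ℝ 1 xs θ₀)
    (hsol : ∀ᶠ θ in 𝓝 θ₀, G (xs θ, θ) = 0)
    (hL : ContDiffAt ℝ 1 L (x₀, θ₀)) :
    HasFDerivAt (fun θ => L (xs θ, θ))
      (-((fderiv ℝ (fun x => L (x, θ₀)) x₀).comp
          ((H.symm : EuclideanSpace ℝ (Fin N) →L[ℝ] EuclideanSpace ℝ (Fin N)).comp
            (fderiv ℝ (fun t => G (x₀, t)) θ₀)))
        + fderiv ℝ (fun t => L (x₀, t)) θ₀) θ₀ := by
  have hA := (hxsC1.differentiableAt one_ne_zero).hasFDerivAt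
  have hGd := hasFDerivAt_graph_aux G xs x₀ θ₀ hxs₀ (hC1.differentiableAt one_ne_zero) _ hA
  have hLd := hasFDerivAt_graph_aux L xs x₀ θ₀ hxs₀ (hL.differentiableAt one_ne_zero) _ hA
  have h0 : HasFDerivAt (fun θ => G (xs θ, θ))
      (0 : EuclideanSpace ℝ (Fin P) →L[ℝ] EuclideanSpace ℝ (Fin N)) θ₀ :=
    (hasFDerivAt_const (0 : EuclideanSpace ℝ (Fin N)) θ₀).congr_of_eventuallyEq hsol
  have hz := hGd.unique h0
  rw [← hH] at hz
  refine hLd.congr_fderiv ?_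
  congr 1
  ext1 v
  have hv : H (fderiv ℝ xs θ₀ v) + fderiv ℝ (fun t => G (x₀, t)) θ₀ v = 0 := by
    simpa using DFunLike.congr_fun hz v
  have hv2 : fderiv ℝ xs θ₀ v = -(H.symm (fderiv ℝ (fun t => G (x₀, t)) θ₀ v)) := by
    rw [← map_neg, ← eq_neg_of_add_eq_zero_left hv, H.symm_apply_apply]
  simp [hv2]
end

section
/- Let A : ℝ^N × ℝ^P → ℝ^N be continuously differentiable near (x₀, θ₀) with x₀ = A(x₀, θ₀), and suppose the operator norm of M := (∂A/∂x)(x₀, θ₀) satisfies ‖M‖ < 1. Then I − M is invertible, the local fixed point map x*(θ) with x*(θ₀) = x₀ is differentiable at θ₀, and its derivative is given by the convergent Neumann series dx*/dθ(θ₀) = Σ_{n=0}^{∞} Mⁿ · (∂A/∂θ)(x₀, θ₀), where Mⁿ denotes the n-fold composition of M with itself. -/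
open Filter Topology

/-- If the spectral/operator norm of `M = ∂A/∂x(x₀,θ₀)` is `< 1`, then `I - M` is
invertible and the derivative of the local fixed point map is given by the convergent
Neumann series `∑ Mⁿ ∘ ∂A/∂θ(x₀,θ₀)`. -/
theorem stmt_3 {N P : ℕ}
    (A : EuclideanSpace ℝ (Fin N) × EuclideanSpace ℝ (Fin P) → EuclideanSpace ℝ (Fin N))
    (x₀ : EuclideanSpace ℝ (Fin N)) (θ₀ : EuclideanSpace ℝ (Fin P))
    (hC1 : ContDiffAt ℝ 1 A (x₀, θ₀))
    (hfix : x₀ = A (x₀, θ₀))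
    (M : EuclideanSpace ℝ (Fin N) →L[ℝ] EuclideanSpace ℝ (Fin N))
    (hM : M = fderiv ℝ (fun x => A (x, θ₀)) x₀)
    (hnorm : ‖M‖ < 1) :
    (∃ J : EuclideanSpace ℝ (Fin N) ≃L[ℝ] EuclideanSpace ℝ (Fin N),
      (J : EuclideanSpace ℝ (Fin N) →L[ℝ] EuclideanSpace ℝ (Fin N))
        = ContinuousLinearMap.id ℝ (EuclideanSpace ℝ (Fin N)) - M) ∧
    Summable (fun n : ℕ => (M ^ n).comp (fderiv ℝ (fun t => A (x₀, t)) θ₀)) ∧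
    ∃ U ∈ 𝓝 θ₀, ∃ xs : EuclideanSpace ℝ (Fin P) → EuclideanSpace ℝ (Fin N),
      xs θ₀ = x₀ ∧ (∀ θ ∈ U, xs θ = A (xs θ, θ)) ∧
      HasFDerivAt xs
        (∑' n : ℕ, (M ^ n).comp (fderiv ℝ (fun t => A (x₀, t)) θ₀)) θ₀ := by
  set B := fderiv ℝ (fun t => A (x₀, t)) θ₀ with hB
  have hS : Summable (fun n : ℕ => M ^ n) := summable_geometric_of_norm_lt_one hnorm
  have h1 : (∑' n : ℕ, M ^ n) * (1 - M) = 1 := geom_series_mul_neg M hnorm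
  have h2 : (1 - M) * (∑' n : ℕ, M ^ n) = 1 := mul_neg_geom_series M hnorm
  set S := ∑' n : ℕ, M ^ n with hSdef
  let J : EuclideanSpace ℝ (Fin N) ≃L[ℝ] EuclideanSpace ℝ (Fin N) :=
    ContinuousLinearEquiv.equivOfInverse (1 - M) S
      (fun x => DFunLike.congr_fun h1 x) (fun x => DFunLike.congr_fun h2 x)
  have hJ : (J : EuclideanSpace ℝ (Fin N) →L[ℝ] EuclideanSpace ℝ (Fin N)) = 1 - M := by
    ext1 x; rfl
  have hJs : (J.symm : EuclideanSpace ℝ (Fin N) →L[ℝ] EuclideanSpace ℝ (Fin N)) = S := by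
    ext1 x; rfl
  have hsum : HasSum (fun n : ℕ => (M ^ n).comp B) (S.comp B) :=
    ((ContinuousLinearMap.compL ℝ (EuclideanSpace ℝ (Fin P)) (EuclideanSpace ℝ (Fin N))
      (EuclideanSpace ℝ (Fin N))).flip B).hasSum hS.hasSum
  refine ⟨⟨J, hJ⟩, hsum.summable, ?_⟩
  rw [hsum.tsum_eq]
  have hA : HasStrictFDerivAt A (fderiv ℝ A (x₀, θ₀)) (x₀, θ₀) :=
    hC1.hasStrictFDerivAt (by norm_num)
  set A' := fderiv ℝ A (x₀, θ₀) with hA'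
  have hMA : M = A' ∘L .inl ℝ _ _ := by
    rw [hM]
    exact (hA.hasFDerivAt.comp x₀ (hasFDerivAt_prodMk_left x₀ θ₀)).fderiv
  have hBA : B = A' ∘L .inr ℝ _ _ :=
    (hA.hasFDerivAt.comp θ₀ (hasFDerivAt_prodMk_right x₀ θ₀)).fderiv
  let f : EuclideanSpace ℝ (Fin P) × EuclideanSpace ℝ (Fin N) → EuclideanSpace ℝ (Fin N) :=
    fun v => v.2 - A (v.2, v.1)
  have hf : HasStrictFDerivAt f
      (ContinuousLinearMap.snd ℝ _ _ - A' ∘L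
        ((ContinuousLinearMap.snd ℝ _ _).prod (ContinuousLinearMap.fst ℝ _ _))) (θ₀, x₀) := by
    refine hasStrictFDerivAt_snd.sub ?_
    exact HasStrictFDerivAt.comp (g := A) (f := fun v : EuclideanSpace ℝ (Fin P) ×
      EuclideanSpace ℝ (Fin N) => (v.2, v.1)) (θ₀, x₀) hA
      (hasStrictFDerivAt_snd.prodMk hasStrictFDerivAt_fst)
  set f' := (ContinuousLinearMap.snd ℝ (EuclideanSpace ℝ (Fin P)) (EuclideanSpace ℝ (Fin N))
      - A' ∘L ((ContinuousLinearMap.snd ℝ _ _).prod (ContinuousLinearMap.fst ℝ _ _))) with hf'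
  have hr : f' ∘L .inr ℝ _ _ = (J : EuclideanSpace ℝ (Fin N) →L[ℝ] EuclideanSpace ℝ (Fin N)) := by
    rw [hJ, hMA]
    ext1 x
    simp [hf']
  have hl : f' ∘L .inl ℝ _ _ = -B := by
    rw [hBA]
    ext1 x
    simp [hf']
  have hinv : (f' ∘L .inr ℝ _ _).IsInvertible := ⟨J, hr.symm⟩
  have hd := hf.hasStrictFDerivAt_implicitFunctionOfProdDomain hinv
  have he := hf.eventually_apply_implicitFunctionOfProdDomain hinv
  have hp := (hf.eventually_apply_eq_iff_implicitFunctionOfProdDomain hinv).self_of_nhds.mp rfl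
  refine ⟨_, he, hf.implicitFunctionOfProdDomain hinv, hp, ?_, ?_⟩
  · intro θ hθ
    have h0 : f (θ₀, x₀) = 0 := sub_eq_zero.mpr hfix
    have h3 : f (θ, hf.implicitFunctionOfProdDomain hinv θ) = f (θ₀, x₀) := hθ
    rw [h0] at h3
    exact sub_eq_zero.mp h3
  · have hD : (-(f' ∘L .inr ℝ _ _).inverse ∘L (f' ∘L .inl ℝ _ _)) = S.comp B := by
      rw [hl, hr, ContinuousLinearMap.inverse_equiv, hJs]
      ext1 x
      simp
    have hd2 := hd.hasFDerivAt
    rw [hD] at hd2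
    exact hd2
end

section
/- Let X ⊂ ℝ^N be a compact convex set with nonempty interior, and let ψ : X → ℝ be continuous on X, strictly convex, and differentiable on int X, with the essential smoothness property that ‖∇ψ(x_k)‖ → ∞ for every sequence (x_k) in int X converging to a boundary point of X. Let c ∈ ℝ^N, α > 0, and x̄ ∈ int X. Then the function x ↦ α⟨c, x⟩ + D_ψ(x, x̄) attains a unique minimizer x* over X, this minimizer lies in the interior int X, and it is characterized by the equation ∇ψ(x*) = ∇ψ(x̄) − α c. -/
open Filter Topology
open scoped RealInnerProductSpace

theorem grad_ineq {N : ℕ} {X : Set (EuclideanSpace ℝ (Fin N))}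
    {ψ : EuclideanSpace ℝ (Fin N) → ℝ} (hc : ConvexOn ℝ X ψ)
    {G x z : EuclideanSpace ℝ (Fin N)} (hx : x ∈ X) (hz : z ∈ X)
    (hG : HasGradientAt ψ G x) : ψ x + ⟪G, z - x⟫ ≤ ψ z := by
  have h1 := hc.comp_affineMap (AffineMap.lineMap x z : ℝ →ᵃ[ℝ] EuclideanSpace ℝ (Fin N))
  have h2 : HasDerivAt (ψ ∘ (AffineMap.lineMap x z : ℝ →ᵃ[ℝ] EuclideanSpace ℝ (Fin N)))
      (⟪G, z - x⟫) 0 := by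
    have h3 : HasFDerivAt ψ (InnerProductSpace.toDual ℝ _ G)
        ((AffineMap.lineMap x z : ℝ →ᵃ[ℝ] EuclideanSpace ℝ (Fin N)) 0) := by
      simpa using hG.hasFDerivAt
    have h4 := h3.comp_hasDerivAt (0 : ℝ) AffineMap.hasDerivAt_lineMap
    simpa using h4
  have h5 := h1.le_slope_of_hasDerivAt (x := 0) (y := 1) (by simpa using hx) (by simpa using hz)
    one_pos h2
  simp [slope_def_field] at h5
  linarith

/-- For an essentially smooth, strictly convex Bregman generating function `ψ` on a
compact convex set `X` with nonempty interior (gradient `g` blowing up at the boundary),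
the Bregman proximal problem `min_{x ∈ X} α⟨c,x⟩ + D_ψ(x, x̄)` with `x̄ ∈ int X` has a
unique minimizer; it lies in `int X` and is characterized by `∇ψ(x*) = ∇ψ(x̄) - αc`. -/
theorem stmt_10 {N : ℕ} (X : Set (EuclideanSpace ℝ (Fin N)))
    (hXcomp : IsCompact X) (hXconv : Convex ℝ X) (hXint : (interior X).Nonempty)
    (ψ : EuclideanSpace ℝ (Fin N) → ℝ)
    (g : EuclideanSpace ℝ (Fin N) → EuclideanSpace ℝ (Fin N))
    (hψcont : ContinuousOn ψ X) (hψconv : StrictConvexOn ℝ X ψ)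
    (hgrad : ∀ x ∈ interior X, HasGradientAt ψ (g x) x)
    (hblow : ∀ (u : ℕ → EuclideanSpace ℝ (Fin N)) (y : EuclideanSpace ℝ (Fin N)),
      (∀ k, u k ∈ interior X) → y ∈ X \ interior X →
      Tendsto u atTop (𝓝 y) → Tendsto (fun k => ‖g (u k)‖) atTop atTop)
    (c : EuclideanSpace ℝ (Fin N)) (α : ℝ) (hα : 0 < α)
    (xbar : EuclideanSpace ℝ (Fin N)) (hxbar : xbar ∈ interior X) :
    let F : EuclideanSpace ℝ (Fin N) → ℝ := fun x =>
      α * ⟪c, x⟫ + (ψ x - ψ xbar - ⟪g xbar, x - xbar⟫)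
    ∃ xs ∈ interior X,
      (∀ x ∈ X, F xs ≤ F x) ∧
      (∀ x ∈ X, F x = F xs → x = xs) ∧
      g xs = g xbar - α • c ∧
      (∀ y ∈ interior X, g y = g xbar - α • c → y = xs) := by
  intro F
  have hsub := interior_subset (s := X)
  have hF : ∀ x, F x = ψ x + ⟪α • c - g xbar, x⟫ + (⟪g xbar, xbar⟫ - ψ xbar) := by
    intro x
    simp only [F, inner_sub_left, inner_sub_right, real_inner_smul_left]
    ring
  have hFcont : ContinuousOn F X := by
    have : ContinuousOn
        (fun x => ψ x + ⟪α • c - g xbar, x⟫ + (⟪g xbar, xbar⟫ - ψ xbar)) X :=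
      (hψcont.add (by fun_prop)).add continuousOn_const
    exact this.congr (fun x _ => hF x)
  have hineq : ∀ x ∈ interior X, ∀ z ∈ X,
      F x + ⟪g x + (α • c - g xbar), z - x⟫ ≤ F z := by
    intro x hx z hz
    have := grad_ineq hψconv.convexOn (hsub hx) hz (hgrad x hx)
    rw [hF, hF, inner_add_left, inner_sub_right (α • c - g xbar)]
    linarith
  obtain ⟨xs, hxs, hmin⟩ := hXcomp.exists_isMinOn ⟨xbar, hsub hxbar⟩ hFcont
  obtain ⟨xM, hxM, hmax⟩ := hXcomp.exists_isMaxOn ⟨xbar, hsub hxbar⟩ hFcont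
  have hmin' : ∀ x ∈ X, F xs ≤ F x := fun x hx => hmin hx
  have hmax' : ∀ x ∈ X, F x ≤ F xM := fun x hx => hmax hx
  have huniq : ∀ x ∈ X, F x = F xs → x = xs := by
    intro x hx he
    by_contra hne
    have h1 := hψconv.2 hx hxs hne (show (0 : ℝ) < 1/2 by norm_num)
      (show (0 : ℝ) < 1/2 by norm_num) (by norm_num)
    have h2 := hmin' _ (hXconv hx hxs (a := 1/2) (b := 1/2) (by norm_num) (by norm_num)
      (by norm_num))
    have h3 := hF x
    have h4 := hF xs
    rw [hF ((1/2 : ℝ) • x + (1/2 : ℝ) • xs), inner_add_right, real_inner_smul_right,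
      real_inner_smul_right] at h2
    simp only [smul_eq_mul] at h1
    linarith
  have hxsint : xs ∈ interior X := by
    by_contra hnot
    obtain ⟨r, hr, hball⟩ := Metric.nhds_basis_closedBall.mem_iff.1
      (mem_interior_iff_mem_nhds.1 hxbar)
    let t : ℕ → ℝ := fun k => 1 / ((k : ℝ) + 1)
    have ht0 : ∀ k, 0 < t k := fun k => by positivity
    have ht1 : ∀ k, t k ≤ 1 := fun k => by
      simp only [t]
      rw [div_le_one (by positivity)]
      have : (0 : ℝ) ≤ k := by positivity
      linarith
    let u : ℕ → EuclideanSpace ℝ (Fin N) := fun k => xs + t k • (xbar - xs)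
    have hu : ∀ k, u k ∈ interior X := fun k =>
      hXconv.add_smul_sub_mem_interior hxs hxbar ⟨ht0 k, ht1 k⟩
    have hlim : Tendsto u atTop (𝓝 xs) := by
      have h0 : Tendsto t atTop (𝓝 0) := tendsto_one_div_add_atTop_nhds_zero_nat
      have := (h0.smul_const (xbar - xs)).const_add xs
      simpa using this
    have hb := hblow u xs hu ⟨hxs, hnot⟩ hlim
    have hbound : ∀ k, ‖g (u k)‖ ≤ (F xM - F xs) / r + ‖α • c - g xbar‖ := by
      intro k
      set G := g (u k) + (α • c - g xbar) with hG
      have e1 := hineq _ (hu k) xs hxs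
      have e2 := hmin' _ (hsub (hu k))
      have hd : xs - u k = (-(t k)) • (xbar - xs) := by
        simp only [u]; module
      have e3 : 0 ≤ ⟪G, xbar - xs⟫ := by
        rw [← hG, hd, real_inner_smul_right] at e1
        by_contra hneg
        push Not at hneg
        nlinarith [ht0 k]
      have hz : xbar + (r / ‖G‖) • G ∈ X := by
        apply hball
        rw [mem_closedBall_iff_norm, add_sub_cancel_left, norm_smul, norm_div, norm_norm,
          Real.norm_of_nonneg hr.le]
        by_cases h0 : ‖G‖ = 0
        · simp [h0, hr.le]
        · rw [div_mul_cancel₀ _ h0]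
      have e4 := hineq _ (hu k) _ hz
      have hd2 : xbar + (r / ‖G‖) • G - u k = (1 - t k) • (xbar - xs) + (r / ‖G‖) • G := by
        simp only [u]; module
      have e5 : r / ‖G‖ * (‖G‖ * ‖G‖) = r * ‖G‖ := by
        by_cases h0 : ‖G‖ = 0
        · simp [h0]
        · field_simp
      rw [← hG, hd2, inner_add_right, real_inner_smul_right, real_inner_smul_right,
        real_inner_self_eq_norm_mul_norm, e5] at e4
      have e6 := mul_nonneg (sub_nonneg.2 (ht1 k)) e3
      have e7 := hmax' _ hz
      have e8 : ‖G‖ ≤ (F xM - F xs) / r := by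
        rw [le_div_iff₀ hr]; linarith
      have e9 : ‖g (u k)‖ ≤ ‖G‖ + ‖α • c - g xbar‖ := by
        have := norm_sub_le G (α • c - g xbar)
        rwa [hG, add_sub_cancel_right, ← hG] at this
      linarith
    obtain ⟨k, hk⟩ := (hb.eventually_gt_atTop
      ((F xM - F xs) / r + ‖α • c - g xbar‖)).exists
    exact absurd (hbound k) (not_le.2 hk)
  refine ⟨xs, hxsint, hmin', huniq, ?_, ?_⟩
  · have hloc : IsLocalMin F xs := hmin.isLocalMin (mem_interior_iff_mem_nhds.1 hxsint)
    have hd : HasFDerivAt F (InnerProductSpace.toDual ℝ _ (g xs) +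
        InnerProductSpace.toDual ℝ _ (α • c - g xbar)) xs := by
      rw [show F = _ from funext hF]
      have h1 := ((hgrad xs hxsint).hasFDerivAt.add
        (InnerProductSpace.toDual ℝ _ (α • c - g xbar)).hasFDerivAt).add_const
        (⟪g xbar, xbar⟫ - ψ xbar)
      exact h1
    have h0 := hloc.hasFDerivAt_eq_zero hd
    rw [← map_add, LinearIsometryEquiv.map_eq_zero_iff] at h0
    rw [eq_neg_of_add_eq_zero_left h0, neg_sub]
  · intro y hy he
    apply huniq y (hsub hy)
    have h1 := hineq y hy xs hxs
    rw [he, sub_add_sub_cancel, sub_self, inner_zero_left, add_zero] at h1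
    exact le_antisymm h1 (hmin' y (hsub hy))
end

section
/- Let a₁, …, a_M ∈ ℝ^N be nonzero vectors and b₁, …, b_M ∈ ℝ, and let X = {x ∈ ℝ^N : ⟨aᵢ, x⟩ ≤ bᵢ for all i = 1, …, M} be bounded with nonempty interior. Define ψ(x) = Σ_{i=1}^{M} (bᵢ − ⟨aᵢ, x⟩) log(bᵢ − ⟨aᵢ, x⟩) for x ∈ X (with 0·log 0 = 0). Then: (i) ψ is continuous on X; (ii) for every sequence (x_k) in int X converging to a point of the boundary ∂X = X \ int X, one has ‖∇ψ(x_k)‖ → ∞; and (iii) there exists m > 0 such that ψ is m-strongly convex on int X. -/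
open Filter Topology
open scoped RealInnerProductSpace

lemma aux_interior {N M : ℕ} (a : Fin M → EuclideanSpace ℝ (Fin N)) (b : Fin M → ℝ)
    (ha : ∀ i, a i ≠ 0) (x : EuclideanSpace ℝ (Fin N)) :
    x ∈ interior {x : EuclideanSpace ℝ (Fin N) | ∀ i, ⟪a i, x⟫ ≤ b i} ↔
      ∀ i, 0 < b i - ⟪a i, x⟫ := by
  constructor
  · intro hx i
    have hc : Tendsto (fun t : ℝ => x + t • a i) (𝓝[>] 0) (𝓝 x) := by
      have : Continuous (fun t : ℝ => x + t • a i) := by fun_prop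
      have h := this.tendsto 0
      simp only [zero_smul, add_zero] at h
      exact h.mono_left nhdsWithin_le_nhds
    have h1 := hc.eventually (mem_interior_iff_mem_nhds.1 hx)
    obtain ⟨t, ht, ht0⟩ := (h1.and self_mem_nhdsWithin).exists
    have h2 : ⟪a i, x + t • a i⟫ ≤ b i := ht i
    rw [inner_add_right, inner_smul_right, real_inner_self_eq_norm_sq] at h2
    have h3 : 0 < ‖a i‖ := norm_pos_iff.2 (ha i)
    have h4 : 0 < t * ‖a i‖ ^ 2 := mul_pos ht0 (by positivity)
    linarith
  · intro h
    have ho : IsOpen {x : EuclideanSpace ℝ (Fin N) | ∀ i, 0 < b i - ⟪a i, x⟫} := by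
      simp only [Set.ofPred_forall]
      exact isOpen_iInter_of_finite fun i => isOpen_lt (by fun_prop) (by fun_prop)
    exact interior_maximal (fun y hy i => by have := hy i; linarith) ho h

lemma aux_strong (S : ℝ) (hS : 0 < S) :
    StrongConvexOn (Set.Ioo 0 S) (1 / S) (fun t : ℝ => t * Real.log t) := by
  rw [strongConvexOn_iff_convex]
  apply convexOn_of_hasDerivWithinAt2_nonneg (convex_Ioo 0 S)
    (f' := fun t => Real.log t + 1 - t / S) (f'' := fun t => t⁻¹ - 1 / S)
  · apply Continuous.continuousOn
    exact Real.continuous_mul_log.sub (by fun_prop)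
  · rw [interior_Ioo]
    intro x hx
    have h1 := Real.hasDerivAt_mul_log hx.1.ne'
    have h2 : HasDerivAt (fun t : ℝ => 1 / S / 2 * ‖t‖ ^ 2) (x / S) x := by
      simp only [Real.norm_eq_abs, sq_abs]
      refine ((hasDerivAt_pow 2 x).const_mul (1 / S / 2)).congr_deriv ?_
      push_cast; ring
    exact (h1.sub h2).hasDerivWithinAt
  · rw [interior_Ioo]
    intro x hx
    exact (((Real.hasDerivAt_log hx.1.ne').add_const 1).sub
      ((hasDerivAt_id x).div_const S)).hasDerivWithinAt
  · rw [interior_Ioo]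
    intro x hx
    have := one_div_le_one_div_of_le hx.1 hx.2.le
    simp only [one_div] at *
    linarith

lemma aux_antilip {N M : ℕ} (a : Fin M → EuclideanSpace ℝ (Fin N)) (b : Fin M → ℝ)
    (hbdd : Bornology.IsBounded {x : EuclideanSpace ℝ (Fin N) | ∀ i, ⟪a i, x⟫ ≤ b i})
    (z : EuclideanSpace ℝ (Fin N)) (hz : ∀ i, ⟪a i, z⟫ ≤ b i) :
    ∃ K : ℝ, 0 < K ∧ ∀ x : EuclideanSpace ℝ (Fin N), ‖x‖ ^ 2 ≤ K * ∑ i, ⟪a i, x⟫ ^ 2 := by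
  let f : EuclideanSpace ℝ (Fin N) →ₗ[ℝ] EuclideanSpace ℝ (Fin M) :=
    { toFun := fun x => WithLp.toLp 2 (fun i => ⟪a i, x⟫)
      map_add' := fun x y => by ext i; simp [inner_add_right]
      map_smul' := fun c x => by ext i; simp [inner_smul_right] }
  have hf : ∀ x i, f x i = ⟪a i, x⟫ := fun x i => rfl
  have hker : LinearMap.ker f = ⊥ := by
    rw [LinearMap.ker_eq_bot']
    intro v hv
    by_contra hv0
    have hv' : ∀ i, ⟪a i, v⟫ = 0 := fun i => by rw [← hf, hv]; rfl
    obtain ⟨R, hR⟩ := hbdd.exists_norm_le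
    have hn : 0 < ‖v‖ := norm_pos_iff.2 hv0
    have h1 := hR (z + ((R + ‖z‖ + 1) / ‖v‖) • v) (fun i => by
      rw [inner_add_right, inner_smul_right, hv' i]; simpa using hz i)
    have hR0 : 0 ≤ R := (norm_nonneg _).trans h1
    have h2 : ‖((R + ‖z‖ + 1) / ‖v‖) • v‖ = R + ‖z‖ + 1 := by
      rw [norm_smul, Real.norm_eq_abs, abs_of_nonneg (by positivity)]
      field_simp
    have h3 := norm_sub_le (z + ((R + ‖z‖ + 1) / ‖v‖) • v) z
    rw [add_sub_cancel_left, h2] at h3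
    linarith
  obtain ⟨K, hK, hfK⟩ := f.exists_antilipschitzWith hker
  refine ⟨(K : ℝ) ^ 2, by positivity, fun x => ?_⟩
  have h := hfK.le_mul_dist x 0
  rw [map_zero, dist_zero_right, dist_zero_right] at h
  have h2 : ‖f x‖ ^ 2 = ∑ i, ⟪a i, x⟫ ^ 2 := by
    rw [EuclideanSpace.norm_sq_eq]
    simp [hf]
  rw [← h2, ← mul_pow]
  gcongr

lemma aux_grad {N M : ℕ} (a : Fin M → EuclideanSpace ℝ (Fin N)) (b : Fin M → ℝ)
    (x v : EuclideanSpace ℝ (Fin N)) (hx : ∀ i, 0 < b i - ⟪a i, x⟫) :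
    ⟪gradient (fun x : EuclideanSpace ℝ (Fin N) =>
      ∑ i, (b i - ⟪a i, x⟫) * Real.log (b i - ⟪a i, x⟫)) x, v⟫ =
      ∑ i, (Real.log (b i - ⟪a i, x⟫) + 1) * (- ⟪a i, v⟫) := by
  have h : HasFDerivAt (fun x : EuclideanSpace ℝ (Fin N) =>
      ∑ i, (b i - ⟪a i, x⟫) * Real.log (b i - ⟪a i, x⟫))
      (∑ i, (Real.log (b i - ⟪a i, x⟫) + 1) • (- innerSL ℝ (a i))) x := by
    apply HasFDerivAt.fun_sum
    intro i _
    have h1 : HasFDerivAt (fun x : EuclideanSpace ℝ (Fin N) => b i - ⟪a i, x⟫)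
      (- innerSL ℝ (a i)) x := ((innerSL ℝ (a i)).hasFDerivAt).const_sub (b i)
    exact (Real.hasDerivAt_mul_log (hx i).ne').comp_hasFDerivAt x h1
  have h2 := congrArg (fun L => L v) (toDual_gradient (𝕜 := ℝ) (f := (fun x : EuclideanSpace ℝ (Fin N) =>
      ∑ i, (b i - ⟪a i, x⟫) * Real.log (b i - ⟪a i, x⟫))) (x := x))
  simp only [InnerProductSpace.toDual_apply_apply] at h2
  rw [h2, h.fderiv]
  simp

/-- The polyhedral entropy generating function
`ψ(x) = Σᵢ (bᵢ - ⟨aᵢ,x⟩) log(bᵢ - ⟨aᵢ,x⟩)` on a bounded polyhedron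
`X = {x : ⟨aᵢ,x⟩ ≤ bᵢ ∀i}` with nonempty interior: `ψ` is continuous on `X`, its
gradient blows up along interior sequences converging to boundary points, and `ψ` is
`m`-strongly convex on `int X` for some `m > 0`.
(Mathlib's `Real.log 0 = 0` realizes the convention `0 · log 0 = 0`.) -/
theorem stmt_11 {N M : ℕ} (a : Fin M → EuclideanSpace ℝ (Fin N)) (b : Fin M → ℝ)
    (ha : ∀ i, a i ≠ 0)
    (hbdd : Bornology.IsBounded {x : EuclideanSpace ℝ (Fin N) | ∀ i, ⟪a i, x⟫ ≤ b i})
    (hint : (interior {x : EuclideanSpace ℝ (Fin N) | ∀ i, ⟪a i, x⟫ ≤ b i}).Nonempty) :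
    let X : Set (EuclideanSpace ℝ (Fin N)) := {x | ∀ i, ⟪a i, x⟫ ≤ b i}
    let ψ : EuclideanSpace ℝ (Fin N) → ℝ := fun x =>
      ∑ i, (b i - ⟪a i, x⟫) * Real.log (b i - ⟪a i, x⟫)
    ContinuousOn ψ X ∧
    (∀ (u : ℕ → EuclideanSpace ℝ (Fin N)) (y : EuclideanSpace ℝ (Fin N)),
      (∀ k, u k ∈ interior X) → y ∈ X \ interior X →
      Tendsto u atTop (𝓝 y) → Tendsto (fun k => ‖gradient ψ (u k)‖) atTop atTop) ∧
    (∃ m : ℝ, 0 < m ∧ ConvexOn ℝ (interior X) (fun x => ψ x - m / 2 * ‖x‖ ^ 2)) := by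

  intro X ψ
  obtain ⟨z, hz⟩ := hint
  have hz' := (aux_interior a b ha z).1 hz
  refine ⟨?_, ?_, ?_⟩
  · apply Continuous.continuousOn
    apply continuous_finsetSum
    intro i _
    exact Real.continuous_mul_log.comp (by fun_prop : Continuous fun x => b i - ⟪a i, x⟫)
  · intro u y hu hy hlim
    have hu' := fun k => (aux_interior a b ha (u k)).1 (hu k)
    obtain ⟨j, hj⟩ : ∃ j, b j - ⟪a j, y⟫ = 0 := by
      by_contra! hne
      apply hy.2
      refine (aux_interior a b ha y).2 fun i => lt_of_le_of_ne ?_ (hne i).symm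
      have := hy.1 i
      linarith
    have hs : ∀ i, Tendsto (fun k => b i - ⟪a i, u k⟫) atTop (𝓝 (b i - ⟪a i, y⟫)) := by
      intro i
      have hc : Continuous fun x : EuclideanSpace ℝ (Fin N) => b i - ⟪a i, x⟫ := by fun_prop
      exact (hc.tendsto y).comp hlim
    let T : Fin M → ℕ → ℝ := fun i k => (Real.log (b i - ⟪a i, u k⟫) + 1) * (- ⟪a i, z - u k⟫)
    have hv : ∀ i, Tendsto (fun k => - ⟪a i, z - u k⟫) atTop (𝓝 (- ⟪a i, z - y⟫)) := by
      intro i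
      have hc : Continuous fun x : EuclideanSpace ℝ (Fin N) => - ⟪a i, z - x⟫ := by fun_prop
      exact (hc.tendsto y).comp hlim
    have hbot : ∀ i, b i - ⟪a i, y⟫ = 0 → Tendsto (T i) atTop atBot := by
      intro i hi
      have hl : Tendsto (fun k => Real.log (b i - ⟪a i, u k⟫)) atTop atBot := by
        apply Real.tendsto_log_nhdsGT_zero.comp
        refine tendsto_nhdsWithin_iff.2 ⟨?_, Eventually.of_forall fun k => hu' k i⟩
        rw [← hi]; exact hs i
      have hl1 := tendsto_atBot_add_const_right atTop (1 : ℝ) hl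
      refine hl1.atBot_mul_pos ?_ (hv i)
      have := hz' i
      rw [inner_sub_right]
      linarith
    have hB : ∀ i, ∃ B, ∀ᶠ k in atTop, T i k ≤ B := by
      intro i
      by_cases hi : b i - ⟪a i, y⟫ = 0
      · exact ⟨0, (hbot i hi).eventually_le_atBot 0⟩
      · have := (((hs i).log hi).add_const 1).mul (hv i)
        exact ⟨_, this.eventually_le_const (lt_add_one _)⟩
    choose B hB using hB
    have hsum : Tendsto (fun k => ∑ i, T i k) atTop atBot := by
      have h1 := tendsto_atBot_add_const_right atTop (∑ i ∈ Finset.univ.erase j, B i) (hbot j hj)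
      refine tendsto_atBot_mono' _ ?_ h1
      filter_upwards [eventually_all.2 hB] with k hk
      rw [← Finset.add_sum_erase _ _ (Finset.mem_univ j)]
      gcongr with i _
      exact hk i
    have hC : ∀ᶠ k in atTop, ‖z - u k‖ ≤ ‖z - y‖ + 1 :=
      ((tendsto_const_nhds.sub hlim).norm).eventually_le_const (lt_add_one _)
    have hpos : 0 < ‖z - y‖ + 1 := by positivity
    have h2 := (tendsto_neg_atBot_atTop.comp hsum).atTop_div_const hpos
    refine tendsto_atTop_mono' _ ?_ h2
    filter_upwards [hC] with k hk
    rw [div_le_iff₀ hpos]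
    have h3 : ⟪gradient ψ (u k), z - u k⟫ = ∑ i, T i k := aux_grad a b (u k) (z - u k) (hu' k)
    have h4 := abs_real_inner_le_norm (gradient ψ (u k)) (z - u k)
    rw [h3] at h4
    calc _ = -∑ i, T i k := rfl
      _ ≤ |∑ i, T i k| := neg_le_abs _
      _ ≤ _ := h4
      _ ≤ _ := by gcongr
  · obtain ⟨K, hK, hKx⟩ := aux_antilip a b hbdd z (fun i => by have := hz' i; linarith)
    obtain ⟨R, hR⟩ := hbdd.exists_norm_le
    have hR0 : 0 ≤ R := (norm_nonneg _).trans (hR z (interior_subset hz))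
    let S : ℝ := ∑ i, (|b i| + ‖a i‖ * R) + 1
    have hnn : ∀ i, 0 ≤ |b i| + ‖a i‖ * R := fun i => by positivity
    have hS : 0 < S := by
      have := Finset.sum_nonneg (fun i (_ : i ∈ Finset.univ) => hnn i)
      positivity
    have hle : ∀ x ∈ interior X, ∀ i, b i - ⟪a i, x⟫ ∈ Set.Ioo 0 S := by
      intro x hx i
      refine ⟨(aux_interior a b ha x).1 hx i, ?_⟩
      have h1 := Finset.single_le_sum (fun i _ => hnn i) (Finset.mem_univ i)
      have h2 := (abs_real_inner_le_norm (a i) x).trans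
        (mul_le_mul_of_nonneg_left (hR x (interior_subset hx)) (norm_nonneg _))
      have h3 := neg_abs_le ⟪a i, x⟫
      have h4 := le_abs_self (b i)
      simp only [S]
      linarith
    have hcX : Convex ℝ X := by
      intro x hx y hy p q hp hq hpq i
      rw [inner_add_right, inner_smul_right, inner_smul_right]
      have h1 := mul_le_mul_of_nonneg_left (hx i) hp
      have h2 := mul_le_mul_of_nonneg_left (hy i) hq
      calc _ ≤ p * b i + q * b i := add_le_add h1 h2
        _ = b i := by rw [← add_mul, hpq, one_mul]
    refine ⟨1 / (S * K), by positivity, ?_⟩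
    rw [← strongConvexOn_iff_convex]
    refine ⟨hcX.interior, ?_⟩
    intro x hx y hy p q hp hq hpq
    have hst := (aux_strong S hS).2
    have hi : ∀ i, (b i - ⟪a i, p • x + q • y⟫) * Real.log (b i - ⟪a i, p • x + q • y⟫) ≤
        p * ((b i - ⟪a i, x⟫) * Real.log (b i - ⟪a i, x⟫)) +
        q * ((b i - ⟪a i, y⟫) * Real.log (b i - ⟪a i, y⟫)) -
        p * q * (1 / S / 2) * ⟪a i, x - y⟫ ^ 2 := by
      intro i
      have h := hst (hle x hx i) (hle y hy i) hp hq hpq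
      have e : p • (b i - ⟪a i, x⟫) + q • (b i - ⟪a i, y⟫) = b i - ⟪a i, p • x + q • y⟫ := by
        rw [inner_add_right, inner_smul_right, inner_smul_right, smul_eq_mul, smul_eq_mul]
        linear_combination (b i) * hpq
      have e2 : ‖(b i - ⟪a i, x⟫) - (b i - ⟪a i, y⟫)‖ ^ 2 = ⟪a i, x - y⟫ ^ 2 := by
        rw [Real.norm_eq_abs, sq_abs, inner_sub_right]; ring
      rw [e] at h
      simp only [e2, smul_eq_mul] at h
      linarith
    have hsum := Finset.sum_le_sum (fun i (_ : i ∈ Finset.univ) => hi i)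
    rw [Finset.sum_sub_distrib, Finset.sum_add_distrib, ← Finset.mul_sum, ← Finset.mul_sum,
      ← Finset.mul_sum] at hsum
    have hk : 1 / (S * K) / 2 * ‖x - y‖ ^ 2 ≤ 1 / S / 2 * ∑ i, ⟪a i, x - y⟫ ^ 2 := by
      calc _ ≤ 1 / (S * K) / 2 * (K * ∑ i, ⟪a i, x - y⟫ ^ 2) := by
            gcongr; exact hKx _
        _ = _ := by field_simp
    have hk2 := mul_le_mul_of_nonneg_left hk (mul_nonneg hp hq)
    simp only [smul_eq_mul, ψ]
    linarith
end
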